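/- (Costa's entropy power inequality, interpolation form) Let X be a real random variable with probability density f_X, finite second moment, and finite differential entropy, and let W be an independent standard Gaussian. For a ∈ [0,1] let N(a) = (1/(2πe)) exp(2h(a)), where h(a) is the differential entropy of X + √a·W (h(0) = h(X)). Then for every a ∈ [0,1], N(a) ≥ (1−a)·N(0) + a·N(1); that is, the entropy power of X + √a·W is at least the linear interpolation between the entropy powers of X and X + W. -/

import Mathlib

open MeasureTheory Filter

/-!
Write `p` for the density of `X + √a * W`, `ρ_k = p⁽ᵏ⁾ / p`, and `J = ∫ ρ_1 ^ 2 * p` for the Fisher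
information. De Bruijn's identity `h' = J / 2` gives `N' = N * J` and `N'' = N * (J ^ 2 + J')`. The
heat equation `∂p/∂a = p'' / 2` and one integration by parts give
`J' = -∫ (ρ_2 - ρ_1 ^ 2) ^ 2 * p`. As `∫ ρ_2 * p = 0`, Jensen's inequality yields
`J ^ 2 = (∫ (ρ_2 - ρ_1 ^ 2) * p) ^ 2 ≤ -J'`, so `N` is concave on `(0, ∞)`. Concavity extends to
`a = 0`, where `N` may a priori be discontinuous, because `N 0 ≤ N a`.

The domination needed to differentiate under the integrals comes from Jensen's inequality for the
posterior law of `X` given the output: `ρ_k` is the posterior mean of a Hermite polynomial, so each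
even moment `∫ ρ_k ^ n * p` is controlled by a Gaussian integral.
-/

namespace GaussianChannel

open Polynomial Set Topology

section ProbDensity

variable {α : Type*} {mα : MeasurableSpace α} {μ : Measure α} {w u : α → ℝ}

/-- `w` is a probability density with respect to `μ`. Integrability is not a field: it follows from
`integral_eq_one`, because the integral of a non-integrable function is `0`. -/
structure IsProbDensity (w : α → ℝ) (μ : Measure α := by volume_tac) : Prop where
  nonneg : ∀ x, 0 ≤ w x
  integral_eq_one : ∫ x, w x ∂μ = 1

lemma IsProbDensity.integrable (hw : IsProbDensity w μ) : Integrable w μ :=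
  .of_integral_ne_zero (by simp [hw.integral_eq_one])

lemma IsProbDensity.isProbabilityMeasure (hw : IsProbDensity w μ) :
    IsProbabilityMeasure (μ.withDensity fun x ↦ ENNReal.ofReal (w x)) := by
  refine ⟨?_⟩
  rw [withDensity_apply _ .univ, setLIntegral_univ,
    ← ofReal_integral_eq_lintegral_ofReal hw.integrable (ae_of_all _ hw.nonneg),
    hw.integral_eq_one, ENNReal.ofReal_one]

lemma IsProbDensity.integral_withDensity (hw : IsProbDensity w μ) (u : α → ℝ) :
    ∫ x, u x ∂μ.withDensity (fun x ↦ ENNReal.ofReal (w x)) = ∫ x, w x * u x ∂μ := by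
  rw [integral_withDensity_eq_integral_toReal_smul₀ hw.integrable.aemeasurable.ennreal_ofReal
    (by simp)]
  simp only [ENNReal.toReal_ofReal (hw.nonneg _), smul_eq_mul]

lemma IsProbDensity.integrable_withDensity_iff (hw : IsProbDensity w μ) :
    Integrable u (μ.withDensity fun x ↦ ENNReal.ofReal (w x)) ↔
      Integrable (fun x ↦ w x * u x) μ := by
  rw [integrable_withDensity_iff_integrable_smul₀' hw.integrable.aemeasurable.ennreal_ofReal
    (by simp)]
  simp only [ENNReal.toReal_ofReal (hw.nonneg _), smul_eq_mul]

lemma IsProbDensity.map_integral_le (hw : IsProbDensity w μ) {g : ℝ → ℝ} {s : Set ℝ}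
    (hg : ConvexOn ℝ s g) (hgc : ContinuousOn g s) (hs : IsClosed s) (hus : ∀ x, u x ∈ s)
    (hu : Integrable (fun x ↦ w x * u x) μ) (hgu : Integrable (fun x ↦ w x * g (u x)) μ) :
    g (∫ x, w x * u x ∂μ) ≤ ∫ x, w x * g (u x) ∂μ := by
  have := hw.isProbabilityMeasure
  simpa only [hw.integral_withDensity, Function.comp_apply] using
    hg.map_integral_le hgc hs (ae_of_all _ hus) (hw.integrable_withDensity_iff.2 hu)
      (hw.integrable_withDensity_iff.2 hgu)

end ProbDensity

section HeatKernel

variable {a : ℝ}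

/-- The density `φ_a` of the centred Gaussian law of variance `a`, with the variance a real number
so that it can be differentiated in `a`. -/
noncomputable def heatKernel (a z : ℝ) : ℝ :=
  (√(2 * Real.pi * a))⁻¹ * Real.exp (-z ^ 2 / (2 * a))

lemma heatKernel_eq_gaussianPDFReal (ha : 0 ≤ a) :
    heatKernel a = ProbabilityTheory.gaussianPDFReal 0 a.toNNReal := by
  funext z
  simp only [heatKernel, ProbabilityTheory.gaussianPDFReal, sub_zero, Real.coe_toNNReal a ha]

lemma heatKernel_pos (ha : 0 < a) (z : ℝ) : 0 < heatKernel a z := by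
  unfold heatKernel; positivity

lemma continuous_heatKernel (a : ℝ) : Continuous (heatKernel a) := by
  unfold heatKernel; fun_prop

lemma heatKernel_le (ha : 0 < a) (z : ℝ) : heatKernel a z ≤ (√(2 * Real.pi * a))⁻¹ := by
  refine mul_le_of_le_one_right (by positivity) (Real.exp_le_one_iff.2 ?_)
  rw [neg_div]
  exact neg_nonpos.2 (by positivity)

lemma log_heatKernel (ha : 0 < a) (z : ℝ) :
    Real.log (heatKernel a z) = -(Real.log (2 * Real.pi * a) / 2) - z ^ 2 / (2 * a) := by
  rw [heatKernel, Real.log_mul (by positivity) (Real.exp_ne_zero _), Real.log_exp, Real.log_inv,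
    Real.log_sqrt (by positivity)]
  ring

lemma isProbDensity_heatKernel (ha : 0 < a) : IsProbDensity (heatKernel a) where
  nonneg z := (heatKernel_pos ha z).le
  integral_eq_one := by
    rw [heatKernel_eq_gaussianPDFReal ha.le]
    exact ProbabilityTheory.integral_gaussianPDFReal_eq_one 0 (Real.toNNReal_pos.2 ha).ne'

lemma isProbDensity_heatKernel_sub_left (ha : 0 < a) (y : ℝ) :
    IsProbDensity fun x ↦ heatKernel a (y - x) where
  nonneg x := (heatKernel_pos ha _).le
  integral_eq_one := by
    rw [integral_sub_left_eq_self (heatKernel a) volume y,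
      (isProbDensity_heatKernel ha).integral_eq_one]

lemma hasDerivAt_heatKernel_space (ha : 0 < a) (z : ℝ) :
    HasDerivAt (heatKernel a) (-(z / a) * heatKernel a z) z := by
  have hexp : HasDerivAt (fun z ↦ -z ^ 2 / (2 * a)) (-(z / a)) z := by
    refine ((hasDerivAt_pow 2 z).fun_neg.div_const (2 * a)).congr_deriv ?_
    simp only [Nat.cast_ofNat, Nat.add_one_sub_one, pow_one]
    field_simp
  refine (hexp.exp.const_mul (√(2 * Real.pi * a))⁻¹).congr_deriv ?_
  simp only [heatKernel]; ring

lemma hasDerivAt_inv_sqrt (ha : 0 < a) :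
    HasDerivAt (fun a ↦ (√a)⁻¹) (-(√a)⁻¹ / (2 * a)) a := by
  refine ((Real.hasDerivAt_sqrt ha.ne').fun_inv (by positivity)).congr_deriv ?_
  rw [Real.sq_sqrt ha.le]
  field_simp

lemma hasDerivAt_heatKernel_time (ha : 0 < a) (z : ℝ) :
    HasDerivAt (heatKernel · z) ((z ^ 2 / a - 1) / (2 * a) * heatKernel a z) a := by
  have hexp : HasDerivAt (fun a ↦ -z ^ 2 / (2 * a)) (z ^ 2 / (2 * a ^ 2)) a := by
    refine (((hasDerivAt_inv ha.ne').const_mul (-z ^ 2 / 2)).congr_deriv ?_).congr_of_eventuallyEq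
      (.of_forall fun b ↦ ?_)
    · field_simp
    · field_simp
  have hinv := (hasDerivAt_inv_sqrt (a := 2 * Real.pi * a) (by positivity)).comp a
    ((hasDerivAt_id a).const_mul (2 * Real.pi))
  refine (hinv.mul hexp.exp).congr_deriv ?_
  simp only [heatKernel, Function.comp_apply, mul_one]
  field_simp
  ring

end HeatKernel

section ScaledKernel

variable {a a₀ a₁ : ℝ}

/-- The kernel `a ^ (-m / 2) * q (z / √a) * φ_a(z)`. All space and time derivatives of `φ_a` have
this shape, with `q` a Hermite polynomial. -/
noncomputable def scaledKernel (m : ℕ) (q : ℝ[X]) (a z : ℝ) : ℝ :=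
  (√a)⁻¹ ^ m * q.eval (z / √a) * heatKernel a z

lemma scaledKernel_zero_one (a z : ℝ) : scaledKernel 0 1 a z = heatKernel a z := by
  simp [scaledKernel]

lemma continuous_scaledKernel (m : ℕ) (q : ℝ[X]) (a : ℝ) : Continuous (scaledKernel m q a) := by
  have := continuous_heatKernel a
  unfold scaledKernel
  fun_prop

lemma continuous_scaledKernel_sub_left (m : ℕ) (q : ℝ[X]) (a y : ℝ) :
    Continuous fun x ↦ scaledKernel m q a (y - x) :=
  (continuous_scaledKernel m q a).comp (continuous_sub_left y)

lemma exists_abs_eval_le_exp_sq (q : ℝ[X]) :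
    ∃ C, 0 ≤ C ∧ ∀ w, |q.eval w| ≤ C * Real.exp (w ^ 2 / 4) := by
  induction q using Polynomial.induction_on' with
  | add q r hq hr =>
    obtain ⟨C, hC, hq⟩ := hq
    obtain ⟨D, hD, hr⟩ := hr
    refine ⟨C + D, by positivity, fun w ↦ ?_⟩
    rw [eval_add, add_mul]
    exact (abs_add_le _ _).trans (add_le_add (hq w) (hr w))
  | monomial n c =>
    refine ⟨|c| * (n.factorial * Real.exp 1), by positivity, fun w ↦ ?_⟩
    have hpow : |w| ^ n ≤ n.factorial * Real.exp |w| := by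
      have := Real.pow_div_factorial_le_exp |w| (abs_nonneg w) n
      rwa [div_le_iff₀' (by positivity)] at this
    have hexp : Real.exp |w| ≤ Real.exp 1 * Real.exp (w ^ 2 / 4) := by
      rw [← Real.exp_add, Real.exp_le_exp, ← sq_abs]
      nlinarith [sq_nonneg (|w| - 2)]
    rw [eval_monomial, abs_mul, abs_pow, mul_assoc, mul_assoc]
    gcongr
    exact hpow.trans (by gcongr)

lemma exp_sq_mul_heatKernel_le (ha₀ : 0 < a₀) (ha : a ∈ Icc a₀ a₁) (z : ℝ) :
    Real.exp ((z / √a) ^ 2 / 4) * heatKernel a z ≤ √(2 * a₁ / a₀) * heatKernel (2 * a₁) z := by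
  have hapos : 0 < a := ha₀.trans_le ha.1
  have ha₁ : 0 < a₁ := hapos.trans_le ha.2
  have hcoef : √(2 * a₁ / a₀) * (√(2 * Real.pi * (2 * a₁)))⁻¹ = (√(2 * Real.pi * a₀))⁻¹ := by
    rw [← Real.sqrt_inv, ← Real.sqrt_inv, ← Real.sqrt_mul (by positivity)]
    congr 1
    field_simp
  have hexp : (z / √a) ^ 2 / 4 + -z ^ 2 / (2 * a) = -(z ^ 2 / (4 * a)) := by
    rw [div_pow, Real.sq_sqrt hapos.le]
    field_simp
    ring
  calc Real.exp ((z / √a) ^ 2 / 4) * heatKernel a z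
      = (√(2 * Real.pi * a))⁻¹ * Real.exp (-(z ^ 2 / (4 * a))) := by
        rw [← hexp, Real.exp_add, heatKernel]; ring
    _ ≤ (√(2 * Real.pi * a₀))⁻¹ * Real.exp (-(z ^ 2 / (4 * a₁))) := by
        gcongr
        exacts [ha.1, ha.2]
    _ = √(2 * a₁ / a₀) * heatKernel (2 * a₁) z := by
        rw [heatKernel, ← mul_assoc, hcoef]; ring_nf

lemma exists_abs_scaledKernel_le (m : ℕ) (q : ℝ[X]) (ha₀ : 0 < a₀) (a₁ : ℝ) :
    ∃ C, 0 ≤ C ∧ ∀ a ∈ Icc a₀ a₁, ∀ z, |scaledKernel m q a z| ≤ C * heatKernel (2 * a₁) z := by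
  obtain ⟨C, hC, hq⟩ := exists_abs_eval_le_exp_sq q
  refine ⟨(√a₀)⁻¹ ^ m * C * √(2 * a₁ / a₀), by positivity, fun a ha z ↦ ?_⟩
  have hφ := heatKernel_pos (ha₀.trans_le ha.1) z
  rw [scaledKernel, abs_mul, abs_mul, abs_of_nonneg (by positivity : 0 ≤ (√a)⁻¹ ^ m),
    abs_of_pos hφ]
  calc (√a)⁻¹ ^ m * |q.eval (z / √a)| * heatKernel a z
      ≤ (√a₀)⁻¹ ^ m * (C * Real.exp ((z / √a) ^ 2 / 4)) * heatKernel a z := by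
        gcongr
        exacts [ha.1, hq _]
    _ = (√a₀)⁻¹ ^ m * C * (Real.exp ((z / √a) ^ 2 / 4) * heatKernel a z) := by ring
    _ ≤ (√a₀)⁻¹ ^ m * C * (√(2 * a₁ / a₀) * heatKernel (2 * a₁) z) :=
        mul_le_mul_of_nonneg_left (exp_sq_mul_heatKernel_le ha₀ ha z) (by positivity)
    _ = _ := by ring

lemma exists_abs_scaledKernel_le_const (m : ℕ) (q : ℝ[X]) (ha₀ : 0 < a₀) (a₁ : ℝ) :
    ∃ C, ∀ a ∈ Icc a₀ a₁, ∀ z, |scaledKernel m q a z| ≤ C := by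
  obtain ⟨C, hC, hK⟩ := exists_abs_scaledKernel_le m q ha₀ a₁
  refine ⟨C * (√(2 * Real.pi * (2 * a₁)))⁻¹, fun a ha z ↦ (hK a ha z).trans ?_⟩
  have ha₁ : 0 < 2 * a₁ := by linarith [ha.1, ha.2]
  gcongr
  exact heatKernel_le ha₁ z

lemma integrable_scaledKernel (m : ℕ) (q : ℝ[X]) (ha : 0 < a) :
    Integrable (scaledKernel m q a) := by
  obtain ⟨C, -, hK⟩ := exists_abs_scaledKernel_le m q ha a
  exact ((isProbDensity_heatKernel (mul_pos two_pos ha)).integrable.const_mul C).mono'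
    (continuous_scaledKernel m q a).aestronglyMeasurable
    (ae_of_all _ (hK a (left_mem_Icc.2 le_rfl)))

lemma hasDerivAt_scaledKernel_space (m : ℕ) (q : ℝ[X]) (ha : 0 < a) (z : ℝ) :
    HasDerivAt (scaledKernel m q a) (scaledKernel (m + 1) (derivative q - X * q) a z) z := by
  have hq := (q.hasDerivAt (z / √a)).comp z ((hasDerivAt_id z).div_const √a)
  refine ((hq.const_mul ((√a)⁻¹ ^ m)).mul (hasDerivAt_heatKernel_space ha z)).congr_deriv ?_
  obtain ⟨s, hs, rfl⟩ : ∃ s, 0 < s ∧ a = s ^ 2 := ⟨√a, by positivity, (Real.sq_sqrt ha.le).symm⟩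
  obtain ⟨w, rfl⟩ : ∃ w, z = s * w := ⟨z / s, by field_simp⟩
  simp only [scaledKernel, eval_sub, eval_mul, eval_X, Function.comp_apply, id_eq,
    Real.sqrt_sq hs.le, mul_div_cancel_left₀ _ hs.ne', inv_pow]
  field_simp
  ring

lemma hasDerivAt_scaledKernel_time (m : ℕ) (q : ℝ[X]) (ha : 0 < a) (z : ℝ) :
    HasDerivAt (scaledKernel m q · z)
      (scaledKernel (m + 2) ((X ^ 2 - (m + 1 : ℝ[X])) * q - X * derivative q) a z / 2) a := by
  have hinv := hasDerivAt_inv_sqrt ha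
  have hq := (q.hasDerivAt (z * (√a)⁻¹)).comp a (hinv.const_mul z)
  refine (((hinv.fun_pow m).mul hq).mul (hasDerivAt_heatKernel_time ha z)).congr_deriv ?_
  obtain ⟨s, hs, rfl⟩ : ∃ s, 0 < s ∧ a = s ^ 2 := ⟨√a, by positivity, (Real.sq_sqrt ha.le).symm⟩
  obtain ⟨w, rfl⟩ : ∃ w, z = s * w := ⟨z / s, by field_simp⟩
  simp only [scaledKernel, eval_sub, eval_mul, eval_X, Function.comp_apply, Pi.mul_apply,
    Real.sqrt_sq hs.le, eval_pow, eval_add, eval_one, eval_natCast, ← div_eq_mul_inv,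
    mul_div_cancel_left₀ _ hs.ne']
  cases m with
  | zero =>
    simp only [Nat.cast_zero, zero_mul, pow_zero, one_mul, zero_add]
    field_simp
    ring
  | succ m =>
    simp only [Nat.cast_succ, Nat.add_sub_cancel, inv_pow]
    field_simp
    ring

end ScaledKernel

section Smoothing

variable {f : ℝ → ℝ} {a a₀ : ℝ}

lemma hasDerivAt_integral_mul {α : Type*} {mα : MeasurableSpace α} {μ : Measure α} {f : α → ℝ}
    {κ κ' : ℝ → α → ℝ} {B C t₀ : ℝ} {s : Set ℝ} (hf : Integrable f μ) (hs : s ∈ 𝓝 t₀)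
    (hκ : ∀ t, AEStronglyMeasurable (κ t) μ) (hκ' : AEStronglyMeasurable (κ' t₀) μ)
    (hB : ∀ x, |κ t₀ x| ≤ B) (hC : ∀ t ∈ s, ∀ x, |κ' t x| ≤ C)
    (hderiv : ∀ t ∈ s, ∀ x, HasDerivAt (κ · x) (κ' t x) t) :
    HasDerivAt (fun t ↦ ∫ x, f x * κ t x ∂μ) (∫ x, f x * κ' t₀ x ∂μ) t₀ := by
  refine (hasDerivAt_integral_of_dominated_loc_of_deriv_le (bound := fun x ↦ ‖f x‖ * C) hs
    (.of_forall fun t ↦ hf.aestronglyMeasurable.mul (hκ t))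
    (hf.mul_bdd (c := B) (hκ t₀) (ae_of_all _ hB)) (hf.aestronglyMeasurable.mul hκ')
    (ae_of_all _ fun x t ht ↦ ?_) (hf.norm.mul_const C)
    (ae_of_all _ fun x t ht ↦ (hderiv t ht x).const_mul (f x))).2
  rw [norm_mul]
  exact mul_le_mul_of_nonneg_left (hC t ht x) (norm_nonneg _)

/-- The density of `X + √a * W`, where `X` has density `f` and `W` is an independent standard
Gaussian variable. -/
noncomputable def outputDensity (f : ℝ → ℝ) (a y : ℝ) : ℝ :=
  ∫ x, f x * heatKernel a (y - x)

/-- Convolution of `f` with `scaledKernel m q a`: the derivatives of `outputDensity f` have this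
form. -/
noncomputable def gaussSmooth (m : ℕ) (q : ℝ[X]) (f : ℝ → ℝ) (a y : ℝ) : ℝ :=
  ∫ x, f x * scaledKernel m q a (y - x)

lemma gaussSmooth_zero_one : gaussSmooth 0 1 f = outputDensity f := by
  funext a y
  simp only [gaussSmooth, outputDensity, scaledKernel_zero_one]

lemma integrable_mul_scaledKernel_sub (hf : Integrable f) (m : ℕ) (q : ℝ[X]) (ha : 0 < a)
    (y : ℝ) : Integrable fun x ↦ f x * scaledKernel m q a (y - x) := by
  obtain ⟨C, hC⟩ := exists_abs_scaledKernel_le_const m q ha a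
  exact hf.mul_bdd (c := C) (continuous_scaledKernel_sub_left m q a y).aestronglyMeasurable
    (ae_of_all _ fun x ↦ hC a (right_mem_Icc.2 le_rfl) (y - x))

lemma integrable_mul_heatKernel_sub (hf : Integrable f) (ha : 0 < a) (y : ℝ) :
    Integrable fun x ↦ f x * heatKernel a (y - x) := by
  simpa only [scaledKernel_zero_one] using integrable_mul_scaledKernel_sub hf 0 1 ha y

lemma integrable_gaussSmooth (hf : Integrable f) (m : ℕ) (q : ℝ[X]) (ha : 0 < a) :
    Integrable (gaussSmooth m q f a) :=
  hf.integrable_convolution (ContinuousLinearMap.mul ℝ ℝ) (integrable_scaledKernel m q ha)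

lemma integrable_outputDensity (hf : Integrable f) (ha : 0 < a) :
    Integrable (outputDensity f a) :=
  gaussSmooth_zero_one (f := f) ▸ integrable_gaussSmooth hf 0 1 ha

lemma integral_outputDensity (hf : Integrable f) (ha : 0 < a) :
    ∫ y, outputDensity f a y = ∫ x, f x := by
  have hφ := isProbDensity_heatKernel ha
  refine (integral_convolution (ContinuousLinearMap.mul ℝ ℝ) hf hφ.integrable).trans ?_
  simp [hφ.integral_eq_one]

lemma hasDerivAt_gaussSmooth_space (hf : Integrable f) (m : ℕ) (q : ℝ[X]) (ha : 0 < a) (y : ℝ) :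
    HasDerivAt (gaussSmooth m q f a) (gaussSmooth (m + 1) (derivative q - X * q) f a y) y := by
  obtain ⟨B, hB⟩ := exists_abs_scaledKernel_le_const m q ha a
  obtain ⟨C, hC⟩ := exists_abs_scaledKernel_le_const (m + 1) (derivative q - X * q) ha a
  have hmem := right_mem_Icc.2 (le_refl a)
  exact hasDerivAt_integral_mul hf univ_mem
    (fun t ↦ (continuous_scaledKernel_sub_left m q a t).aestronglyMeasurable)
    (continuous_scaledKernel_sub_left _ _ a y).aestronglyMeasurable
    (fun x ↦ hB a hmem _) (fun t _ x ↦ hC a hmem _)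
    fun t _ x ↦ (hasDerivAt_scaledKernel_space m q ha (t - x)).comp_sub_const t x

lemma hasDerivAt_gaussSmooth_time (hf : Integrable f) (m : ℕ) (q : ℝ[X]) (ha : 0 < a) (y : ℝ) :
    HasDerivAt (gaussSmooth m q f · y)
      (gaussSmooth (m + 2) ((X ^ 2 - (m + 1 : ℝ[X])) * q - X * derivative q) f a y / 2) a := by
  set r := (X ^ 2 - (m + 1 : ℝ[X])) * q - X * derivative q
  obtain ⟨B, hB⟩ := exists_abs_scaledKernel_le_const m q ha a
  obtain ⟨C, hC⟩ := exists_abs_scaledKernel_le_const (m + 2) r (half_pos ha) (2 * a)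
  refine (hasDerivAt_integral_mul (κ' := fun t x ↦ scaledKernel (m + 2) r t (y - x) / 2)
    (C := C / 2) hf (Icc_mem_nhds (half_lt_self ha) (lt_two_mul_self ha))
    (fun t ↦ (continuous_scaledKernel_sub_left m q t y).aestronglyMeasurable)
    ((continuous_scaledKernel_sub_left (m + 2) r a y).div_const 2).aestronglyMeasurable
    (fun x ↦ hB a (right_mem_Icc.2 le_rfl) (y - x)) (fun t ht x ↦ ?_)
    fun t ht x ↦ hasDerivAt_scaledKernel_time m q ((half_pos ha).trans_le ht.1) (y - x))
    |>.congr_deriv ?_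
  · rw [abs_div, abs_two]
    exact div_le_div_of_nonneg_right (hC t ht _) two_pos.le
  · simp only [← mul_div_assoc, integral_div, gaussSmooth]

lemma continuous_gaussSmooth (hf : Integrable f) (m : ℕ) (q : ℝ[X]) (ha : 0 < a) :
    Continuous (gaussSmooth m q f a) :=
  continuous_iff_continuousAt.2 fun y ↦ (hasDerivAt_gaussSmooth_space hf m q ha y).continuousAt

lemma exists_abs_gaussSmooth_le (hf : Integrable f) (hf0 : ∀ x, 0 ≤ f x) (m : ℕ) (q : ℝ[X])
    (ha₀ : 0 < a₀) (a₁ : ℝ) :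
    ∃ C, ∀ a ∈ Icc a₀ a₁, ∀ y, |gaussSmooth m q f a y| ≤ C * outputDensity f (2 * a₁) y := by
  obtain ⟨C, -, hK⟩ := exists_abs_scaledKernel_le m q ha₀ a₁
  refine ⟨C, fun a ha y ↦ ?_⟩
  have ha₁ : 0 < 2 * a₁ := by linarith [ha.1, ha.2]
  rw [gaussSmooth, outputDensity, ← integral_const_mul, ← Real.norm_eq_abs]
  refine norm_integral_le_of_norm_le ((integrable_mul_heatKernel_sub hf ha₁ y).const_mul C)
    (ae_of_all _ fun x ↦ ?_)
  rw [Real.norm_eq_abs, abs_mul, abs_of_nonneg (hf0 x), mul_left_comm]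
  exact mul_le_mul_of_nonneg_left (hK a ha _) (hf0 x)

lemma outputDensity_pos (hf : IsProbDensity f) (ha : 0 < a) (y : ℝ) :
    0 < outputDensity f a y := by
  have hφ x := heatKernel_pos ha (y - x)
  refine (integral_pos_iff_support_of_nonneg (fun x ↦ mul_nonneg (hf.nonneg x) (hφ x).le)
    (integrable_mul_heatKernel_sub hf.integrable ha y)).2 ?_
  rw [Function.support_mul, Function.support_eq_univ fun x ↦ (hφ x).ne', inter_univ,
    ← integral_pos_iff_support_of_nonneg hf.nonneg hf.integrable, hf.integral_eq_one]
  exact one_pos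

lemma isProbDensity_outputDensity (hf : IsProbDensity f) (ha : 0 < a) :
    IsProbDensity (outputDensity f a) where
  nonneg y := (outputDensity_pos hf ha y).le
  integral_eq_one := by rw [integral_outputDensity hf.integrable ha, hf.integral_eq_one]

end Smoothing

section Hermite

/-- The polynomial `H_k = (-1)^k * He_k`, so that the `k`-th derivative of the standard Gaussian
density `φ` is `H_k * φ`. -/
noncomputable def signedHermite (k : ℕ) : ℝ[X] :=
  (-1) ^ k * (hermite k).map (Int.castRingHom ℝ)

lemma signedHermite_zero : signedHermite 0 = 1 := by
  simp [signedHermite]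

lemma signedHermite_succ (k : ℕ) :
    signedHermite (k + 1) = derivative (signedHermite k) - X * signedHermite k := by
  have hsign : derivative ((-1 : ℝ[X]) ^ k) = 0 := by
    rcases neg_one_pow_eq_or ℝ[X] k with h | h <;> simp [h]
  simp only [signedHermite, hermite_succ, Polynomial.map_sub, Polynomial.map_mul, map_X,
    derivative_mul, hsign, derivative_map]
  ring

lemma derivative_signedHermite_succ (k : ℕ) :
    derivative (signedHermite (k + 1)) = -(k + 1 : ℝ[X]) * signedHermite k := by
  induction k with
  | zero => simp [signedHermite_succ, signedHermite_zero]
  | succ k ih =>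
    rw [signedHermite_succ (k + 1), derivative_sub, derivative_mul, ih, derivative_mul]
    simp only [derivative_X, derivative_neg, derivative_add, derivative_natCast, derivative_one]
    rw [Nat.cast_succ, signedHermite_succ k]
    ring

lemma signedHermite_add_two (k : ℕ) :
    signedHermite (k + 2) =
      (X ^ 2 - (k + 1 : ℝ[X])) * signedHermite k - X * derivative (signedHermite k) := by
  rw [signedHermite_succ (k + 1), derivative_signedHermite_succ, signedHermite_succ k]
  ring

end Hermite

section Score

variable {n : ℕ} {f : ℝ → ℝ} {a a₀ : ℝ}

/-- The ratio `ρ_k = p⁽ᵏ⁾ / p`, where `p = outputDensity f a`; `ρ_1` is the score function of `p`.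
The numerator is `p⁽ᵏ⁾` by `hasDerivAt_gaussSmooth_signedHermite_space`. -/
noncomputable def score (k : ℕ) (f : ℝ → ℝ) (a y : ℝ) : ℝ :=
  gaussSmooth k (signedHermite k) f a y / outputDensity f a y

lemma score_mul_outputDensity (hf : IsProbDensity f) (k : ℕ) (ha : 0 < a) (y : ℝ) :
    score k f a y * outputDensity f a y = gaussSmooth k (signedHermite k) f a y :=
  div_mul_cancel₀ _ (outputDensity_pos hf ha y).ne'

lemma isProbDensity_posterior (hf : IsProbDensity f) (ha : 0 < a) (y : ℝ) :
    IsProbDensity fun x ↦ f x * heatKernel a (y - x) / outputDensity f a y where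
  nonneg x := div_nonneg (mul_nonneg (hf.nonneg x) (heatKernel_pos ha _).le)
    (outputDensity_pos hf ha y).le
  integral_eq_one := by
    rw [integral_div]
    exact div_self (outputDensity_pos hf ha y).ne'

lemma gaussSmooth_div_pow_mul_le (hf : IsProbDensity f) (hn : Even n) (m : ℕ) (q : ℝ[X])
    (ha : 0 < a) (y : ℝ) :
    (gaussSmooth m q f a y / outputDensity f a y) ^ n * outputDensity f a y ≤
      gaussSmooth (m * n) (q ^ n) f a y := by
  have hpow (n : ℕ) (x : ℝ) : f x * heatKernel a (y - x) / outputDensity f a y *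
      ((√a)⁻¹ ^ m * q.eval ((y - x) / √a)) ^ n =
      f x * scaledKernel (m * n) (q ^ n) a (y - x) / outputDensity f a y := by
    rw [scaledKernel, eval_pow, pow_mul]; ring
  have hint (n : ℕ) := (integrable_mul_scaledKernel_sub hf.integrable (m * n) (q ^ n) ha
    y).div_const (outputDensity f a y)
  have hone := hpow 1
  simp only [pow_one, mul_one] at hone
  have hjensen := (isProbDensity_posterior hf ha y).map_integral_le hn.convexOn_pow
    (continuous_pow n).continuousOn isClosed_univ
    (u := fun x ↦ (√a)⁻¹ ^ m * q.eval ((y - x) / √a)) (fun _ ↦ mem_univ _)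
    (by simpa only [hone, mul_one, pow_one] using hint 1) (by simpa only [hpow] using hint n)
  simp only [hone, hpow, integral_div] at hjensen
  rwa [le_div_iff₀ (outputDensity_pos hf ha y)] at hjensen

lemma exists_score_pow_mul_le (hf : IsProbDensity f) (hn : Even n) (k : ℕ) (ha₀ : 0 < a₀)
    (a₁ : ℝ) :
    ∃ C, ∀ a ∈ Icc a₀ a₁, ∀ y,
      score k f a y ^ n * outputDensity f a y ≤ C * outputDensity f (2 * a₁) y := by
  obtain ⟨C, hbound⟩ :=
    exists_abs_gaussSmooth_le hf.integrable hf.nonneg (k * n) (signedHermite k ^ n) ha₀ a₁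
  exact ⟨C, fun a ha y ↦ (gaussSmooth_div_pow_mul_le hf hn k _ (ha₀.trans_le ha.1) y).trans
    ((le_abs_self _).trans (hbound a ha y))⟩

lemma exists_abs_score_pow_mul_score_pow_le (hf : IsProbDensity f) (i m j n : ℕ) (ha₀ : 0 < a₀)
    (a₁ : ℝ) :
    ∃ C, ∀ a ∈ Icc a₀ a₁, ∀ y,
      |score i f a y ^ m * score j f a y ^ n * outputDensity f a y| ≤
        C * outputDensity f (2 * a₁) y := by
  obtain ⟨C, hi⟩ := exists_score_pow_mul_le hf (even_two_mul m) i ha₀ a₁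
  obtain ⟨D, hj⟩ := exists_score_pow_mul_le hf (even_two_mul n) j ha₀ a₁
  refine ⟨C + D, fun a ha y ↦ ?_⟩
  have hp := outputDensity_pos hf (ha₀.trans_le ha.1) y
  have hyoung (u v : ℝ) : |u * v| ≤ u ^ 2 + v ^ 2 := by
    rw [abs_mul, ← sq_abs u, ← sq_abs v]
    nlinarith [two_mul_le_add_sq |u| |v|, mul_nonneg (abs_nonneg u) (abs_nonneg v)]
  rw [abs_mul, abs_of_pos hp, add_mul]
  calc |score i f a y ^ m * score j f a y ^ n| * outputDensity f a y
      ≤ ((score i f a y ^ m) ^ 2 + (score j f a y ^ n) ^ 2) * outputDensity f a y :=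
        mul_le_mul_of_nonneg_right (hyoung _ _) hp.le
    _ = score i f a y ^ (2 * m) * outputDensity f a y +
        score j f a y ^ (2 * n) * outputDensity f a y := by ring
    _ ≤ _ := add_le_add (hi a ha y) (hj a ha y)

lemma continuous_outputDensity (hf : Integrable f) (ha : 0 < a) :
    Continuous (outputDensity f a) :=
  gaussSmooth_zero_one (f := f) ▸ continuous_gaussSmooth hf 0 1 ha

lemma continuous_score (hf : IsProbDensity f) (k : ℕ) (ha : 0 < a) : Continuous (score k f a) :=
  (continuous_gaussSmooth hf.integrable k _ ha).div (continuous_outputDensity hf.integrable ha)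
    fun y ↦ (outputDensity_pos hf ha y).ne'

lemma integrable_score_pow_mul_score_pow (hf : IsProbDensity f) (i m j n : ℕ) (ha : 0 < a) :
    Integrable fun y ↦ score i f a y ^ m * score j f a y ^ n * outputDensity f a y := by
  obtain ⟨C, hC⟩ := exists_abs_score_pow_mul_score_pow_le hf i m j n ha a
  refine ((integrable_outputDensity hf.integrable (mul_pos two_pos ha)).const_mul C).mono' ?_
    (ae_of_all _ (hC a (right_mem_Icc.2 le_rfl)))
  exact ((((continuous_score hf i ha).pow m).mul ((continuous_score hf j ha).pow n)).mul
    (continuous_outputDensity hf.integrable ha)).aestronglyMeasurable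

lemma hasDerivAt_gaussSmooth_signedHermite_space (hf : IsProbDensity f) (k : ℕ) (ha : 0 < a)
    (y : ℝ) :
    HasDerivAt (gaussSmooth k (signedHermite k) f a)
      (score (k + 1) f a y * outputDensity f a y) y := by
  rw [score_mul_outputDensity hf _ ha, signedHermite_succ]
  exact hasDerivAt_gaussSmooth_space hf.integrable k _ ha y

lemma hasDerivAt_gaussSmooth_signedHermite_time (hf : IsProbDensity f) (k : ℕ) (ha : 0 < a)
    (y : ℝ) :
    HasDerivAt (gaussSmooth k (signedHermite k) f · y)
      (score (k + 2) f a y * outputDensity f a y / 2) a := by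
  rw [score_mul_outputDensity hf _ ha, signedHermite_add_two]
  exact hasDerivAt_gaussSmooth_time hf.integrable k _ ha y

lemma hasDerivAt_outputDensity_space (hf : IsProbDensity f) (ha : 0 < a) (y : ℝ) :
    HasDerivAt (outputDensity f a) (score 1 f a y * outputDensity f a y) y := by
  simpa only [signedHermite_zero, gaussSmooth_zero_one] using
    hasDerivAt_gaussSmooth_signedHermite_space hf 0 ha y

lemma hasDerivAt_outputDensity_time (hf : IsProbDensity f) (ha : 0 < a) (y : ℝ) :
    HasDerivAt (outputDensity f · y) (score 2 f a y * outputDensity f a y / 2) a := by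
  simpa only [signedHermite_zero, gaussSmooth_zero_one] using
    hasDerivAt_gaussSmooth_signedHermite_time hf 0 ha y

lemma hasDerivAt_score_space (hf : IsProbDensity f) (k : ℕ) (ha : 0 < a) (y : ℝ) :
    HasDerivAt (score k f a) (score (k + 1) f a y - score 1 f a y * score k f a y) y := by
  have hp := (outputDensity_pos hf ha y).ne'
  refine ((hasDerivAt_gaussSmooth_signedHermite_space hf k ha y).fun_div
    (hasDerivAt_outputDensity_space hf ha y) hp).congr_deriv ?_
  rw [← score_mul_outputDensity hf k ha]
  field_simp

lemma hasDerivAt_score_time (hf : IsProbDensity f) (k : ℕ) (ha : 0 < a) (y : ℝ) :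
    HasDerivAt (score k f · y)
      ((score (k + 2) f a y - score 2 f a y * score k f a y) / 2) a := by
  have hp := (outputDensity_pos hf ha y).ne'
  refine ((hasDerivAt_gaussSmooth_signedHermite_time hf k ha y).fun_div
    (hasDerivAt_outputDensity_time hf ha y) hp).congr_deriv ?_
  rw [← score_mul_outputDensity hf k ha]
  field_simp

end Score

section FisherInfo

variable {f : ℝ → ℝ} {a : ℝ}

/-- The Fisher information of `outputDensity f a`. -/
noncomputable def fisherInfo (f : ℝ → ℝ) (a : ℝ) : ℝ :=
  ∫ y, score 1 f a y ^ 2 * outputDensity f a y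

lemma integral_score_two_mul (hf : IsProbDensity f) (ha : 0 < a) :
    ∫ y, score 2 f a y * outputDensity f a y = 0 := by
  refine integral_eq_zero_of_hasDerivAt_of_integrable
    (f := fun y ↦ score 1 f a y * outputDensity f a y) (fun y ↦ ?_) ?_ ?_
  · exact ((hasDerivAt_score_space hf 1 ha y).mul
      (hasDerivAt_outputDensity_space hf ha y)).congr_deriv (by ring)
  · simpa using integrable_score_pow_mul_score_pow hf 2 1 0 0 ha
  · simpa using integrable_score_pow_mul_score_pow hf 1 1 0 0 ha

lemma integrable_score_two_sub_sq_mul (hf : IsProbDensity f) (ha : 0 < a) :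
    Integrable fun y ↦ (score 2 f a y - score 1 f a y ^ 2) ^ 2 * outputDensity f a y := by
  have hint := integrable_score_pow_mul_score_pow (a := a) hf
  exact (((hint 2 2 0 0 ha).sub ((hint 2 1 1 2 ha).const_mul 2)).add (hint 1 4 0 0 ha)).congr
    (ae_of_all _ fun y ↦ by simp only [Pi.sub_apply, Pi.add_apply]; ring)

lemma integrable_deriv_score_one_sq_mul (hf : IsProbDensity f) (ha : 0 < a) :
    Integrable fun y ↦ score 1 f a y * score 3 f a y * outputDensity f a y -
      score 1 f a y ^ 2 * score 2 f a y * outputDensity f a y / 2 := by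
  have hint := integrable_score_pow_mul_score_pow (a := a) hf
  exact ((hint 1 1 3 1 ha).sub ((hint 1 2 2 1 ha).div_const 2)).congr
    (ae_of_all _ fun y ↦ by simp only [Pi.sub_apply, pow_one])

lemma fisherInfo_sq_le (hf : IsProbDensity f) (ha : 0 < a) :
    fisherInfo f a ^ 2 ≤
      ∫ y, (score 2 f a y - score 1 f a y ^ 2) ^ 2 * outputDensity f a y := by
  have hint := integrable_score_pow_mul_score_pow (a := a) hf
  have hρ₂ : Integrable fun y ↦ score 2 f a y * outputDensity f a y := by
    simpa using hint 2 1 0 0 ha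
  have hρ₁ : Integrable fun y ↦ score 1 f a y ^ 2 * outputDensity f a y := by
    simpa using hint 1 2 0 0 ha
  have hmean : ∫ y, outputDensity f a y * (score 2 f a y - score 1 f a y ^ 2) =
      -fisherInfo f a := by
    simp only [mul_comm (outputDensity f a _), sub_mul]
    rw [integral_sub hρ₂ hρ₁, integral_score_two_mul hf ha, fisherInfo, zero_sub]
  have hjensen := (isProbDensity_outputDensity hf ha).map_integral_le even_two.convexOn_pow
    (continuous_pow 2).continuousOn isClosed_univ
    (u := fun y ↦ score 2 f a y - score 1 f a y ^ 2) (fun _ ↦ mem_univ _)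
    ((hρ₂.sub hρ₁).congr (ae_of_all _ fun y ↦ by simp only [Pi.sub_apply]; ring))
    (by simpa only [mul_comm] using integrable_score_two_sub_sq_mul hf ha)
  rw [hmean, neg_sq] at hjensen
  simpa only [mul_comm] using hjensen

lemma hasDerivAt_score_one_sq_mul_time (hf : IsProbDensity f) (ha : 0 < a) (y : ℝ) :
    HasDerivAt (fun a ↦ score 1 f a y ^ 2 * outputDensity f a y)
      (score 1 f a y * score 3 f a y * outputDensity f a y -
        score 1 f a y ^ 2 * score 2 f a y * outputDensity f a y / 2) a :=
  (((hasDerivAt_score_time hf 1 ha y).fun_pow 2).mul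
    (hasDerivAt_outputDensity_time hf ha y)).congr_deriv (by push_cast; ring)

lemma integral_deriv_score_one_sq_mul (hf : IsProbDensity f) (ha : 0 < a) :
    ∫ y, (score 1 f a y * score 3 f a y * outputDensity f a y -
        score 1 f a y ^ 2 * score 2 f a y * outputDensity f a y / 2) =
      -∫ y, (score 2 f a y - score 1 f a y ^ 2) ^ 2 * outputDensity f a y := by
  have hint := integrable_score_pow_mul_score_pow (a := a) hf
  have hflux : ∀ y, HasDerivAt
      (fun y ↦ (score 1 f a y * score 2 f a y - score 1 f a y ^ 3 / 2) * outputDensity f a y)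
      ((score 1 f a y * score 3 f a y * outputDensity f a y -
          score 1 f a y ^ 2 * score 2 f a y * outputDensity f a y / 2) +
        (score 2 f a y - score 1 f a y ^ 2) ^ 2 * outputDensity f a y) y := fun y ↦
    ((((hasDerivAt_score_space hf 1 ha y).mul (hasDerivAt_score_space hf 2 ha y)).sub
      (((hasDerivAt_score_space hf 1 ha y).fun_pow 3).div_const 2)).mul
        (hasDerivAt_outputDensity_space hf ha y)).congr_deriv (by
          simp only [Pi.mul_apply, Pi.sub_apply]; push_cast; ring)
  have hderiv := integrable_deriv_score_one_sq_mul hf ha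
  have hdissip := integrable_score_two_sub_sq_mul hf ha
  rw [← add_eq_zero_iff_eq_neg, ← integral_add hderiv hdissip]
  refine integral_eq_zero_of_hasDerivAt_of_integrable hflux (hderiv.add hdissip) ?_
  exact ((hint 1 1 2 1 ha).sub ((hint 1 3 0 0 ha).div_const 2)).congr
    (ae_of_all _ fun y ↦ by simp only [Pi.sub_apply]; ring)

lemma hasDerivAt_fisherInfo (hf : IsProbDensity f) (ha : 0 < a) :
    HasDerivAt (fisherInfo f)
      (-∫ y, (score 2 f a y - score 1 f a y ^ 2) ^ 2 * outputDensity f a y) a := by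
  obtain ⟨C, h₁₃⟩ :=
    exists_abs_score_pow_mul_score_pow_le hf 1 1 3 1 (half_pos ha) (2 * a)
  obtain ⟨D, h₁₂⟩ :=
    exists_abs_score_pow_mul_score_pow_le hf 1 2 2 1 (half_pos ha) (2 * a)
  have hpos {b : ℝ} (hb : b ∈ Icc (a / 2) (2 * a)) : 0 < b := (half_pos ha).trans_le hb.1
  have hnhds : Icc (a / 2) (2 * a) ∈ 𝓝 a := Icc_mem_nhds (half_lt_self ha) (lt_two_mul_self ha)
  rw [← integral_deriv_score_one_sq_mul hf ha]
  refine (hasDerivAt_integral_of_dominated_loc_of_deriv_le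
    (bound := fun y ↦ (C + D / 2) * outputDensity f (2 * (2 * a)) y) hnhds ?_ ?_ ?_
    (ae_of_all _ fun y b hb ↦ ?_) ((integrable_outputDensity hf.integrable
      (by positivity)).const_mul _)
    (ae_of_all _ fun y b hb ↦ hasDerivAt_score_one_sq_mul_time hf (hpos hb) y)).2
  · filter_upwards [hnhds] with b hb
    simpa using (integrable_score_pow_mul_score_pow hf 1 2 0 0 (hpos hb)).aestronglyMeasurable
  · simpa using integrable_score_pow_mul_score_pow hf 1 2 0 0 ha
  · exact (integrable_deriv_score_one_sq_mul hf ha).aestronglyMeasurable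
  · have h₁₃ := h₁₃ b hb y
    have h₁₂ := h₁₂ b hb y
    simp only [pow_one] at h₁₃ h₁₂
    refine (abs_sub _ _).trans ?_
    rw [abs_div, abs_two]
    linarith

end FisherInfo

section LogDensity

variable {f : ℝ → ℝ} {a a₀ : ℝ}

lemma integrable_mul_sub_sq (hf : Integrable f) (hm : Integrable fun x ↦ x ^ 2 * f x) (y : ℝ) :
    Integrable fun x ↦ f x * (y - x) ^ 2 := by
  refine ((hf.norm.const_mul (y ^ 2)).add hm.norm |>.const_mul 2).mono'
    (hf.aestronglyMeasurable.mul (by fun_prop)) (ae_of_all _ fun x ↦ ?_)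
  simp only [Pi.add_apply, norm_mul, norm_pow, Real.norm_eq_abs, sq_abs]
  nlinarith [mul_nonneg (abs_nonneg (f x)) (sq_nonneg (y + x))]

lemma integral_mul_sub_sq_le (hf : IsProbDensity f) (hm : Integrable fun x ↦ x ^ 2 * f x)
    (y : ℝ) : ∫ x, f x * (y - x) ^ 2 ≤ 2 * (y ^ 2 + ∫ x, x ^ 2 * f x) := by
  have hy := hf.integrable.const_mul (y ^ 2)
  calc ∫ x, f x * (y - x) ^ 2 ≤ ∫ x, 2 * (y ^ 2 * f x + x ^ 2 * f x) :=
        integral_mono (integrable_mul_sub_sq hf.integrable hm y) ((hy.add hm).const_mul 2)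
          fun x ↦ by nlinarith [mul_nonneg (hf.nonneg x) (sq_nonneg (y + x))]
    _ = _ := by
        rw [integral_const_mul, integral_add hy hm, integral_const_mul, hf.integral_eq_one,
          mul_one]

lemma log_outputDensity_le (hf : IsProbDensity f) (ha : 0 < a) (y : ℝ) :
    Real.log (outputDensity f a y) ≤ -(Real.log (2 * Real.pi * a) / 2) := by
  have hle : outputDensity f a y ≤ (√(2 * Real.pi * a))⁻¹ := by
    calc outputDensity f a y ≤ ∫ x, f x * (√(2 * Real.pi * a))⁻¹ :=
          integral_mono (integrable_mul_heatKernel_sub hf.integrable ha y)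
            (hf.integrable.mul_const _)
            fun x ↦ mul_le_mul_of_nonneg_left (heatKernel_le ha _) (hf.nonneg x)
      _ = _ := by rw [integral_mul_const, hf.integral_eq_one, one_mul]
  refine (Real.log_le_log (outputDensity_pos hf ha y) hle).trans_eq ?_
  rw [Real.log_inv, Real.log_sqrt (by positivity)]

lemma le_log_outputDensity (hf : IsProbDensity f) (hm : Integrable fun x ↦ x ^ 2 * f x)
    (ha : 0 < a) (y : ℝ) :
    -(Real.log (2 * Real.pi * a) / 2) - (y ^ 2 + ∫ x, x ^ 2 * f x) / a ≤
      Real.log (outputDensity f a y) := by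
  have hexp (x : ℝ) : Real.exp (-(Real.log (2 * Real.pi * a) / 2) - (y - x) ^ 2 / (2 * a)) =
      heatKernel a (y - x) := by
    rw [← log_heatKernel ha, Real.exp_log (heatKernel_pos ha _)]
  have hconst := hf.integrable.mul_const (-(Real.log (2 * Real.pi * a) / 2))
  have hquad := (integrable_mul_sub_sq hf.integrable hm y).div_const (2 * a)
  have hsplit (x : ℝ) :
      f x * (-(Real.log (2 * Real.pi * a) / 2) - (y - x) ^ 2 / (2 * a)) =
        f x * -(Real.log (2 * Real.pi * a) / 2) - f x * (y - x) ^ 2 / (2 * a) := by ring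
  have hjensen := hf.map_integral_le convexOn_exp Real.continuous_exp.continuousOn isClosed_univ
    (u := fun x ↦ -(Real.log (2 * Real.pi * a) / 2) - (y - x) ^ 2 / (2 * a))
    (fun _ ↦ mem_univ _) ((hconst.sub hquad).congr (ae_of_all _ fun x ↦ (hsplit x).symm))
    (by simpa only [hexp] using integrable_mul_heatKernel_sub hf.integrable ha y)
  simp only [hexp, hsplit] at hjensen
  refine le_trans ?_ ((Real.le_log_iff_exp_le (outputDensity_pos hf ha y)).2 hjensen)
  rw [integral_sub hconst hquad, integral_mul_const, hf.integral_eq_one, one_mul, integral_div,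
    ← mul_div_mul_left (y ^ 2 + _) a two_ne_zero]
  gcongr
  exact integral_mul_sub_sq_le hf hm y

lemma exists_abs_log_outputDensity_le (hf : IsProbDensity f)
    (hm : Integrable fun x ↦ x ^ 2 * f x) (ha₀ : 0 < a₀) (a₁ : ℝ) :
    ∃ C, ∀ a ∈ Icc a₀ a₁, ∀ y, |Real.log (outputDensity f a y)| ≤ C * (1 + y ^ 2) := by
  set M := ∫ x, x ^ 2 * f x
  set L := max |Real.log (2 * Real.pi * a₀)| |Real.log (2 * Real.pi * a₁)|
  have hM : 0 ≤ M := integral_nonneg fun x ↦ mul_nonneg (sq_nonneg x) (hf.nonneg x)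
  refine ⟨L / 2 + (1 + M) / a₀, fun a ha y ↦ ?_⟩
  have hapos : 0 < a := ha₀.trans_le ha.1
  have hL : |Real.log (2 * Real.pi * a)| ≤ L :=
    abs_le_max_abs_abs (Real.log_le_log (by positivity) (by gcongr; exact ha.1))
      (Real.log_le_log (by positivity) (by gcongr; exact ha.2))
  have hlog : |Real.log (outputDensity f a y)| ≤ L / 2 + (y ^ 2 + M) / a₀ := by
    have hdiv : (y ^ 2 + M) / a ≤ (y ^ 2 + M) / a₀ := by gcongr; exact ha.1
    have hnonneg : 0 ≤ (y ^ 2 + M) / a₀ := by positivity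
    have hle := log_outputDensity_le hf hapos y
    have hge := le_log_outputDensity hf hm hapos y
    rw [abs_le] at hL ⊢
    constructor <;> linarith
  refine hlog.trans ?_
  have hLy : 0 ≤ L / 2 * y ^ 2 := by positivity
  have hMy : (y ^ 2 + M) / a₀ ≤ (1 + M) * (1 + y ^ 2) / a₀ := by
    gcongr
    nlinarith [mul_nonneg hM (sq_nonneg y)]
  linarith [mul_div_right_comm (1 + M) (1 + y ^ 2) a₀]

lemma integrable_one_add_sq_mul_outputDensity (hf : IsProbDensity f)
    (hm : Integrable fun x ↦ x ^ 2 * f x) (ha : 0 < a) :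
    Integrable fun y ↦ (1 + y ^ 2) * outputDensity f a y := by
  have hsq (z : ℝ) : z ^ 2 * heatKernel a z = a * scaledKernel 0 (X ^ 2) a z := by
    rw [scaledKernel, eval_pow, eval_X, div_pow, Real.sq_sqrt ha.le]
    field_simp
  have hmom := integrable_mul_heatKernel_sub hm ha
  have hvar := integrable_mul_scaledKernel_sub hf.integrable 0 (X ^ 2) ha
  have hp := integrable_outputDensity hf.integrable ha
  have hmoment (y : ℝ) : y ^ 2 * outputDensity f a y ≤
      2 * (outputDensity (fun x ↦ x ^ 2 * f x) a y + a * gaussSmooth 0 (X ^ 2) f a y) := by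
    rw [outputDensity, outputDensity, gaussSmooth, ← integral_const_mul, ← integral_const_mul,
      ← integral_add (hmom y) ((hvar y).const_mul a), ← integral_const_mul]
    refine integral_mono ((integrable_mul_heatKernel_sub hf.integrable ha y).const_mul _)
      (((hmom y).add ((hvar y).const_mul a)).const_mul 2) fun x ↦ ?_
    have hnonneg := mul_nonneg (hf.nonneg x) (heatKernel_pos ha (y - x)).le
    simp only [mul_left_comm a, ← hsq]
    nlinarith [mul_nonneg hnonneg (sq_nonneg (y - 2 * x))]
  refine (hp.add (((integrable_outputDensity hm ha).add
    ((integrable_gaussSmooth hf.integrable 0 (X ^ 2) ha).const_mul a)).const_mul 2)).mono'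
    (((continuous_const.add (continuous_pow 2)).mul
      (continuous_outputDensity hf.integrable ha)).aestronglyMeasurable) (ae_of_all _ fun y ↦ ?_)
  have hpos := outputDensity_pos hf ha y
  rw [Real.norm_of_nonneg (by positivity), add_mul, one_mul]
  exact add_le_add_right (hmoment y) _

lemma exists_abs_gaussSmooth_mul_log_le (hf : IsProbDensity f)
    (hm : Integrable fun x ↦ x ^ 2 * f x) (m : ℕ) (q : ℝ[X]) (ha₀ : 0 < a₀) (a₁ : ℝ) :
    ∃ C, ∀ a ∈ Icc a₀ a₁, ∀ y,
      |gaussSmooth m q f a y * (Real.log (outputDensity f a y) + 1)| ≤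
        C * ((1 + y ^ 2) * outputDensity f (2 * a₁) y) := by
  obtain ⟨C, hC⟩ := exists_abs_gaussSmooth_le hf.integrable hf.nonneg m q ha₀ a₁
  obtain ⟨D, hD⟩ := exists_abs_log_outputDensity_le hf hm ha₀ a₁
  refine ⟨C * (D + 1), fun a ha y ↦ ?_⟩
  have hlog : |Real.log (outputDensity f a y) + 1| ≤ (D + 1) * (1 + y ^ 2) := by
    refine (abs_add_le _ _).trans ?_
    rw [abs_one]
    nlinarith [hD a ha y, sq_nonneg y]
  calc |gaussSmooth m q f a y * (Real.log (outputDensity f a y) + 1)|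
      ≤ C * outputDensity f (2 * a₁) y * ((D + 1) * (1 + y ^ 2)) := by
        rw [abs_mul]
        exact mul_le_mul (hC a ha y) hlog (abs_nonneg _) ((abs_nonneg _).trans (hC a ha y))
    _ = _ := by ring

lemma integrable_gaussSmooth_mul_log (hf : IsProbDensity f)
    (hm : Integrable fun x ↦ x ^ 2 * f x) (m : ℕ) (q : ℝ[X]) (ha : 0 < a) :
    Integrable fun y ↦ gaussSmooth m q f a y * (Real.log (outputDensity f a y) + 1) := by
  obtain ⟨C, hC⟩ := exists_abs_gaussSmooth_mul_log_le hf hm m q ha a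
  have hp := continuous_outputDensity hf.integrable ha
  exact ((integrable_one_add_sq_mul_outputDensity hf hm (mul_pos two_pos ha)).const_mul C).mono'
    ((continuous_gaussSmooth hf.integrable m q ha).mul
      ((hp.log fun y ↦ (outputDensity_pos hf ha y).ne').add
        continuous_const)).aestronglyMeasurable
    (ae_of_all _ (hC a (right_mem_Icc.2 le_rfl)))

end LogDensity

section Entropy

variable {f : ℝ → ℝ} {a : ℝ}

/-- The differential entropy of the probability density `f`. Since `Real.log 0 = 0`, points where
`f` vanishes contribute nothing. -/
noncomputable def diffEntropy (f : ℝ → ℝ) : ℝ :=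
  -∫ x, f x * Real.log (f x)

lemma integrable_outputDensity_mul_log (hf : IsProbDensity f)
    (hm : Integrable fun x ↦ x ^ 2 * f x) (ha : 0 < a) :
    Integrable fun y ↦ outputDensity f a y * Real.log (outputDensity f a y) := by
  have hlog := integrable_gaussSmooth_mul_log hf hm 0 1 ha
  rw [gaussSmooth_zero_one] at hlog
  exact (hlog.sub (integrable_outputDensity hf.integrable ha)).congr
    (ae_of_all _ fun y ↦ by simp only [Pi.sub_apply]; ring)

lemma integral_score_two_mul_log (hf : IsProbDensity f) (hm : Integrable fun x ↦ x ^ 2 * f x)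
    (ha : 0 < a) :
    ∫ y, score 2 f a y * outputDensity f a y * (Real.log (outputDensity f a y) + 1) =
      -fisherInfo f a := by
  have hlog (k : ℕ) : Integrable fun y ↦
      score k f a y * outputDensity f a y * (Real.log (outputDensity f a y) + 1) := by
    simpa only [score_mul_outputDensity hf k ha] using
      integrable_gaussSmooth_mul_log hf hm k (signedHermite k) ha
  have hρ₁ : Integrable fun y ↦ score 1 f a y ^ 2 * outputDensity f a y := by
    simpa using integrable_score_pow_mul_score_pow hf 1 2 0 0 ha
  have hflux (y : ℝ) : HasDerivAt
      (fun y ↦ score 1 f a y * outputDensity f a y * (Real.log (outputDensity f a y) + 1))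
      (score 2 f a y * outputDensity f a y * (Real.log (outputDensity f a y) + 1) +
        score 1 f a y ^ 2 * outputDensity f a y) y := by
    have hp := hasDerivAt_outputDensity_space hf ha y
    have hp0 := (outputDensity_pos hf ha y).ne'
    refine (((hasDerivAt_score_space hf 1 ha y).mul hp).mul
      ((hp.log hp0).add_const 1)).congr_deriv ?_
    simp only [Pi.mul_apply]
    field_simp
    ring
  rw [fisherInfo, ← add_eq_zero_iff_eq_neg, ← integral_add (hlog 2) hρ₁]
  exact integral_eq_zero_of_hasDerivAt_of_integrable hflux ((hlog 2).add hρ₁) (hlog 1)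

lemma hasDerivAt_diffEntropy (hf : IsProbDensity f) (hm : Integrable fun x ↦ x ^ 2 * f x)
    (ha : 0 < a) :
    HasDerivAt (fun a ↦ diffEntropy (outputDensity f a)) (fisherInfo f a / 2) a := by
  obtain ⟨C, hC⟩ :=
    exists_abs_gaussSmooth_mul_log_le hf hm 2 (signedHermite 2) (half_pos ha) (2 * a)
  have hpos {b : ℝ} (hb : b ∈ Icc (a / 2) (2 * a)) : 0 < b := (half_pos ha).trans_le hb.1
  have hnhds : Icc (a / 2) (2 * a) ∈ 𝓝 a := Icc_mem_nhds (half_lt_self ha) (lt_two_mul_self ha)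
  have hderiv (y : ℝ) {b : ℝ} (hb : b ∈ Icc (a / 2) (2 * a)) : HasDerivAt
      (fun b ↦ outputDensity f b y * Real.log (outputDensity f b y))
      (gaussSmooth 2 (signedHermite 2) f b y * (Real.log (outputDensity f b y) + 1) / 2) b := by
    refine ((Real.hasDerivAt_mul_log (outputDensity_pos hf (hpos hb) y).ne').comp b
      (hasDerivAt_outputDensity_time hf (hpos hb) y)).congr_deriv ?_
    rw [score_mul_outputDensity hf 2 (hpos hb)]
    ring
  refine (hasDerivAt_integral_of_dominated_loc_of_deriv_le
    (bound := fun y ↦ C * ((1 + y ^ 2) * outputDensity f (2 * (2 * a)) y) / 2) hnhds ?_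
    (integrable_outputDensity_mul_log hf hm ha)
    ((integrable_gaussSmooth_mul_log hf hm 2 _ ha).div_const 2).aestronglyMeasurable
    (ae_of_all _ fun y b hb ↦ ?_)
    (((integrable_one_add_sq_mul_outputDensity hf hm (by positivity)).const_mul C).div_const 2)
    (ae_of_all _ fun y b hb ↦ hderiv y hb)).2.neg.congr_deriv ?_
  · filter_upwards [hnhds] with b hb
    exact (integrable_outputDensity_mul_log hf hm (hpos hb)).aestronglyMeasurable
  · rw [norm_div, Real.norm_two]
    exact div_le_div_of_nonneg_right (hC b hb y) two_pos.le
  · simp only [integral_div, ← score_mul_outputDensity hf 2 ha,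
      integral_score_two_mul_log hf hm ha]
    ring

lemma outputDensity_mul_log_le (hf : IsProbDensity f)
    (hent : Integrable fun x ↦ f x * Real.log (f x)) (ha : 0 < a) (y : ℝ) :
    outputDensity f a y * Real.log (outputDensity f a y) ≤
      outputDensity (fun x ↦ f x * Real.log (f x)) a y := by
  simpa only [outputDensity, mul_comm (heatKernel _ _)] using
    (isProbDensity_heatKernel_sub_left ha y).map_integral_le Real.convexOn_mul_log
      Real.continuous_mul_log.continuousOn isClosed_Ici hf.nonneg
      ((integrable_mul_heatKernel_sub hf.integrable ha y).congr
        (ae_of_all _ fun x ↦ mul_comm _ _))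
      ((integrable_mul_heatKernel_sub hent ha y).congr (ae_of_all _ fun x ↦ mul_comm _ _))

lemma diffEntropy_le_outputDensity (hf : IsProbDensity f) (hm : Integrable fun x ↦ x ^ 2 * f x)
    (hent : Integrable fun x ↦ f x * Real.log (f x)) (ha : 0 < a) :
    diffEntropy f ≤ diffEntropy (outputDensity f a) := by
  refine neg_le_neg ?_
  rw [← integral_outputDensity hent ha]
  exact integral_mono (integrable_outputDensity_mul_log hf hm ha)
    (integrable_outputDensity hent ha) (outputDensity_mul_log_le hf hent ha)

end Entropy

section EntropyPower

variable {f : ℝ → ℝ} {a : ℝ}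

/-- The entropy power of the probability density `f`: the variance of the Gaussian law that has
the same differential entropy. -/
noncomputable def entropyPower (f : ℝ → ℝ) : ℝ :=
  (2 * Real.pi * Real.exp 1)⁻¹ * Real.exp (2 * diffEntropy f)

lemma entropyPower_pos (f : ℝ → ℝ) : 0 < entropyPower f := by
  unfold entropyPower; positivity

lemma entropyPower_le_outputDensity (hf : IsProbDensity f)
    (hm : Integrable fun x ↦ x ^ 2 * f x) (hent : Integrable fun x ↦ f x * Real.log (f x))
    (ha : 0 < a) : entropyPower f ≤ entropyPower (outputDensity f a) := by
  unfold entropyPower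
  gcongr
  exact diffEntropy_le_outputDensity hf hm hent ha

lemma hasDerivAt_entropyPower (hf : IsProbDensity f) (hm : Integrable fun x ↦ x ^ 2 * f x)
    (ha : 0 < a) :
    HasDerivAt (fun a ↦ entropyPower (outputDensity f a))
      (entropyPower (outputDensity f a) * fisherInfo f a) a := by
  refine ((((hasDerivAt_diffEntropy hf hm ha).const_mul 2).exp).const_mul _).congr_deriv ?_
  rw [entropyPower]
  ring

lemma concaveOn_entropyPower (hf : IsProbDensity f) (hm : Integrable fun x ↦ x ^ 2 * f x) :
    ConcaveOn ℝ (Ioi 0) fun a ↦ entropyPower (outputDensity f a) := by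
  have hN {a : ℝ} (ha : 0 < a) := hasDerivAt_entropyPower hf hm ha
  refine concaveOn_of_hasDerivWithinAt2_nonpos (convex_Ioi 0)
    (fun a ha ↦ (hN ha).continuousAt.continuousWithinAt)
    (fun a ha ↦ (hN (interior_subset ha)).hasDerivWithinAt)
    (fun a ha ↦ ((hN (interior_subset ha)).mul
      (hasDerivAt_fisherInfo hf (interior_subset ha))).hasDerivWithinAt) fun a ha ↦ ?_
  nlinarith [entropyPower_pos (outputDensity f a), fisherInfo_sq_le hf (interior_subset ha)]

lemma concaveOn_Ici_of_Ioi {g : ℝ → ℝ} {c : ℝ} (hg : ConcaveOn ℝ (Ioi c) g)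
    (hle : ∀ x, c < x → g c ≤ g x) : ConcaveOn ℝ (Ici c) g := by
  refine LinearOrder.concaveOn_of_lt (convex_Ici c) fun x hx y _ hxy α β hα hβ hαβ ↦ ?_
  rcases (mem_Ici.1 hx).eq_or_lt with rfl | hx
  · have hmem : c < α • c + β • y := by
      calc c = α • c + β • c := by rw [← add_smul, hαβ, one_smul]
        _ < α • c + β • y := by gcongr
    have htend : Tendsto (fun e ↦ g (α • e + β • y)) (𝓝[>] c) (𝓝 (g (α • c + β • y))) :=
      ((hg.continuousOn isOpen_Ioi).continuousAt (Ioi_mem_nhds hmem)).tendsto.comp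
        ((show Continuous fun e ↦ α • e + β • y by fun_prop).continuousAt.mono_left
          nhdsWithin_le_nhds)
    refine ge_of_tendsto htend ?_
    filter_upwards [self_mem_nhdsWithin] with e he
    exact (by gcongr; exact hle e he : α • g c + β • g y ≤ α • g e + β • g y).trans
      (hg.2 he hxy hα.le hβ.le hαβ)
  · exact hg.2 hx (hx.trans hxy) hα.le hβ.le hαβ

end EntropyPower

end GaussianChannel

/-- **Costa's entropy power inequality (interpolation form).** For the additive
Gaussian noise channel, the entropy power of `X + √a·W` dominates the linear
interpolation between the entropy powers of `X` and `X + W`: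
`N(a) ≥ (1−a)·N(0) + a·N(1)` for all `a ∈ [0,1]`. -/
theorem costa_epi_interpolation
    (fX : ℝ → ℝ)
    (hfX_nonneg : ∀ x, 0 ≤ fX x)
    (hfX_prob : (∫ x, fX x) = 1)
    (hfX_mom : Integrable (fun x => x ^ 2 * fX x))
    (hfX_ent : Integrable (fun x => fX x * Real.log (fX x)))
    (fY : ℝ → ℝ → ℝ)
    (hfY : ∀ b, 0 < b → ∀ y, fY b y =
      ∫ x, fX x * ((Real.sqrt (2 * Real.pi * b))⁻¹ *
        Real.exp (-(y - x) ^ 2 / (2 * b))))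
    (h : ℝ → ℝ)
    (hh0 : h 0 = -∫ x, fX x * Real.log (fX x))
    (hhb : ∀ b, 0 < b → h b = -∫ y, fY b y * Real.log (fY b y))
    (N : ℝ → ℝ)
    (hN : ∀ b, N b = (2 * Real.pi * Real.exp 1)⁻¹ * Real.exp (2 * h b)) :
    ∀ a ∈ Set.Icc (0 : ℝ) 1, N a ≥ (1 - a) * N 0 + a * N 1 := by
  have hf : GaussianChannel.IsProbDensity fX := ⟨hfX_nonneg, hfX_prob⟩
  have hN_zero : N 0 = GaussianChannel.entropyPower fX := by
    rw [hN, hh0, GaussianChannel.entropyPower, GaussianChannel.diffEntropy]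
  have hN_pos : ∀ b, 0 < b →
      N b = GaussianChannel.entropyPower (GaussianChannel.outputDensity fX b) := by
    intro b hb
    have hfYb : fY b = GaussianChannel.outputDensity fX b := funext (hfY b hb)
    rw [hN, hhb b hb, hfYb, GaussianChannel.entropyPower, GaussianChannel.diffEntropy]
  have hconc : ConcaveOn ℝ (Set.Ici 0) N := by
    refine GaussianChannel.concaveOn_Ici_of_Ioi
      ((GaussianChannel.concaveOn_entropyPower hf hfX_mom).congr fun b hb ↦ (hN_pos b hb).symm)
      fun b hb ↦ ?_
    rw [hN_zero, hN_pos b hb]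
    exact GaussianChannel.entropyPower_le_outputDensity hf hfX_mom hfX_ent hb
  intro a ha
  simpa using hconc.2 Set.self_mem_Ici (Set.mem_Ici.2 zero_le_one) (sub_nonneg.2 ha.2) ha.1
    (sub_add_cancel 1 a)
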